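/- Let X be a compact metric space, Λ a compact metric space, and w : Λ × X → X a continuous IFS. Then the following are equivalent: (1) for every σ ∈ Ω, lim_{n→∞} diam(w_{σ₁…σₙ}(X)) = 0; (2) for every ε > 0 there exists n₀ ∈ ℕ such that for all n ≥ n₀ and all σ ∈ Ω, diam(w_{σ₁…σₙ}(X)) < ε. -/

import Mathlib

open Metric Set Filter Topology

/-- `seqComp w σ n = w_{σ₁} ∘ ⋯ ∘ w_{σₙ}` (with `σ i` denoting `σ_{i+1}`). -/
def seqComp {Λ X : Type*} (w : Λ → X → X) (σ : ℕ → Λ) : ℕ → X → X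
  | 0 => id
  | n + 1 => seqComp w σ n ∘ w (σ n)

/-!
The diameter of the range of a map is a Lipschitz function of the map in the uniform metric, so
`σ ↦ diam (w_{σ₁…σₙ}(X))` is continuous on the compact space `Ω`. For a fixed `σ` the sets
`w_{σ₁…σₙ}(X)` decrease with `n`, since each new map is composed on the inside. By Dini's theorem
the pointwise convergence of the diameters to the continuous function `0` is uniform.
-/

section DiamRange

variable {X Y Z : Type*} [PseudoMetricSpace Z]

theorem diam_range_le_diam_range_add {f g : X → Z} {δ : ℝ} (hg : Bornology.IsBounded (range g))
    (hδ : 0 ≤ δ) (hfg : ∀ x, dist (f x) (g x) ≤ δ) :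
    diam (range f) ≤ diam (range g) + 2 * δ := by
  refine diam_le_of_forall_dist_le (add_nonneg diam_nonneg (by positivity)) ?_
  rintro _ ⟨x, rfl⟩ _ ⟨y, rfl⟩
  calc dist (f x) (f y)
      ≤ dist (f x) (g x) + dist (g x) (g y) + dist (g y) (f y) := dist_triangle4 ..
    _ ≤ δ + diam (range g) + δ := by
        gcongr
        · exact hfg x
        · exact dist_le_diam_of_mem hg (mem_range_self x) (mem_range_self y)
        · exact dist_comm (g y) (f y) ▸ hfg y
    _ = diam (range g) + 2 * δ := by ring

variable [TopologicalSpace X] [CompactSpace X]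

theorem lipschitzWith_diam_range : LipschitzWith 2 fun f : C(X, Z) => diam (range f) :=
  .of_le_add_mul 2 fun f g =>
    diam_range_le_diam_range_add (isCompact_range g.continuous).isBounded dist_nonneg
      (ContinuousMap.dist_apply_le_dist (f := f) (g := g))

theorem continuous_diam_range [TopologicalSpace Y] {f : Y → X → Z}
    (hf : Continuous (Function.uncurry f)) : Continuous fun y => diam (range (f y)) :=
  lipschitzWith_diam_range.continuous.comp (ContinuousMap.curry ⟨_, hf⟩).continuous

end DiamRange

theorem tendstoUniformly_zero_iff_of_nonneg {ι α : Type*} [Nonempty ι] [SemilatticeSup ι]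
    {F : ι → α → ℝ} (hF : ∀ i a, 0 ≤ F i a) :
    TendstoUniformly F 0 atTop ↔ ∀ ε > 0, ∃ i₀, ∀ i ≥ i₀, ∀ a, F i a < ε := by
  simp only [Metric.tendstoUniformly_iff, eventually_atTop, Pi.zero_apply, dist_zero_left,
    Real.norm_of_nonneg (hF _ _)]

section SeqComp

variable {Λ X : Type*} {w : Λ → X → X}

theorem antitone_range_seqComp (w : Λ → X → X) (σ : ℕ → Λ) :
    Antitone fun n => range (seqComp w σ n) :=
  antitone_nat_of_succ_le fun n => range_comp_subset_range (w (σ n)) (seqComp w σ n)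

theorem antitone_diam_range_seqComp [PseudoMetricSpace X] [BoundedSpace X] (w : Λ → X → X) :
    Antitone fun n σ => diam (range (seqComp w σ n)) :=
  fun _ _ hmn σ => diam_mono (antitone_range_seqComp w σ hmn) (.all _)

theorem continuous_uncurry_seqComp [TopologicalSpace Λ] [TopologicalSpace X]
    (hw : Continuous (Function.uncurry w)) (n : ℕ) :
    Continuous (Function.uncurry fun σ => seqComp w σ n) := by
  induction n with
  | zero => exact continuous_snd
  | succ n ih =>
    have hlast : Continuous fun p : (ℕ → Λ) × X => w (p.1 n) p.2 :=
      hw.comp (f := fun p : (ℕ → Λ) × X => (p.1 n, p.2)) (by fun_prop)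
    exact ih.comp (continuous_fst.prodMk hlast)

theorem tendstoUniformly_diam_range_seqComp [TopologicalSpace Λ] [CompactSpace Λ]
    [PseudoMetricSpace X] [CompactSpace X] (hw : Continuous (Function.uncurry w))
    (h : ∀ σ, Tendsto (fun n => diam (range (seqComp w σ n))) atTop (𝓝 0)) :
    TendstoUniformly (fun n σ => diam (range (seqComp w σ n))) 0 atTop :=
  (antitone_diam_range_seqComp w).tendstoUniformly_of_forall_tendsto
    (fun n => continuous_diam_range (continuous_uncurry_seqComp hw n)) continuous_zero h

end SeqComp

theorem stmt_0_general {Λ X : Type*} [TopologicalSpace Λ] [CompactSpace Λ]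
    [PseudoMetricSpace X] [CompactSpace X]
    (w : Λ → X → X) (hw : Continuous fun p : Λ × X => w p.1 p.2) :
    (∀ σ : ℕ → Λ,
        Tendsto (fun n => diam (Set.range (seqComp w σ n))) atTop (𝓝 0)) ↔
    (∀ ε > (0 : ℝ), ∃ n₀ : ℕ, ∀ n ≥ n₀, ∀ σ : ℕ → Λ,
        diam (Set.range (seqComp w σ n)) < ε) := by
  rw [← tendstoUniformly_zero_iff_of_nonneg fun _ _ => diam_nonneg]
  exact ⟨tendstoUniformly_diam_range_seqComp hw, fun h σ => h.tendsto_at σ⟩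

theorem stmt_0 {Λ X : Type*} [MetricSpace Λ] [CompactSpace Λ]
    [MetricSpace X] [CompactSpace X]
    (w : Λ → X → X) (hw : Continuous fun p : Λ × X => w p.1 p.2) :
    (∀ σ : ℕ → Λ,
        Tendsto (fun n => diam (Set.range (seqComp w σ n))) atTop (𝓝 0)) ↔
    (∀ ε > (0 : ℝ), ∃ n₀ : ℕ, ∀ n ≥ n₀, ∀ σ : ℕ → Λ,
        diam (Set.range (seqComp w σ n)) < ε) :=
  stmt_0_general w hw
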